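/- arXiv:1909.00491 — 3 statements merged into one kernel-verified Lean document; each statement's English description precedes it below -/
import Mathlib

section
/- Let Ω ⊆ ℝ^d be a bounded open set and let A : Ω → Sym_d(ℝ) be measurable and essentially bounded, satisfying almost everywhere in Ω the special Cordes condition ‖A(x)‖_F²/(tr A(x))² ≤ 1/(d−1+ε) for some ε ∈ (0,1), with tr A(x) > 0. Set γ(x) := tr A(x)/‖A(x)‖_F² and let Γ be an essential upper bound for γ on Ω. Then for every smooth vector field ψ : ℝ^d → ℝ^d with compact support contained in Ω, (1/2)∫_Ω ‖Dψ − Dψᵀ‖_F² + ∫_Ω (A : Dψ)² ≥ [(1 − √(1−ε))² / max(Γ², 1)] ∫_Ω ‖Dψ‖_F². -/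
/-!
Two ingredients are combined.

* Integrating by parts twice, `∫ Dψ : Dψᵀ = ∫ (div ψ)²` for compactly supported `ψ`
  (`integral_frobInner_jac_transpose`), and therefore
  `∫ ‖Dψ‖² = (1/2) ∫ ‖Dψ − Dψᵀ‖² + ∫ (div ψ)²`.
* With `γ = tr A / ‖A‖²` the Cordes condition says `‖γ A − I‖² = d − (tr A)² / ‖A‖² ≤ 1 − ε`.
  Writing `s = √(1 − ε)`, Cauchy–Schwarz gives `|γ A : M − tr M| ≤ s ‖M‖` for every matrix `M`,
  and the weighted inequality `(p − q)² ≤ p² / (1 − s) + q² / s` turns this into the pointwise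
  bound `(1 − s) (tr M)² ≤ Γ² (A : M)² + (1 − s) s ‖M‖²` (`cordes_pointwise`).

Taking `M = Dψ`, integrating and absorbing the last term gives
`(1 − s)² ∫ ‖Dψ‖² ≤ (1 − s) (1/2) ∫ ‖Dψ − Dψᵀ‖² + Γ² ∫ (A : Dψ)²`, and both coefficients on the
right are at most `max (Γ²) 1`.
-/

open MeasureTheory Matrix Finset Bornology

noncomputable section

/-- Frobenius inner product of two real `d × d` matrices. -/
def frobInner {d : ℕ} (M N : Matrix (Fin d) (Fin d) ℝ) : ℝ :=
  ∑ i, ∑ j, M i j * N i j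

/-- Squared Frobenius norm of a real `d × d` matrix. -/
def frobSq {d : ℕ} (M : Matrix (Fin d) (Fin d) ℝ) : ℝ := frobInner M M

/-- Squared Euclidean norm of a vector in `ℝ^d`. -/
def vecSq {d : ℕ} (v : Fin d → ℝ) : ℝ := ∑ i, v i ^ 2

/-- Jacobian matrix of a vector field `ψ : ℝ^d → ℝ^d`, `(jac ψ x) i j = ∂_j ψ_i (x)`. -/
def jac {d : ℕ} (ψ : (Fin d → ℝ) → (Fin d → ℝ)) (x : Fin d → ℝ) :
    Matrix (Fin d) (Fin d) ℝ :=
  Matrix.of fun i j => fderiv ℝ ψ x (Pi.single j 1) i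

/-- Gradient of a scalar field `φ : ℝ^d → ℝ`. -/
def grad' {d : ℕ} (φ : (Fin d → ℝ) → ℝ) (x : Fin d → ℝ) : Fin d → ℝ :=
  fun i => fderiv ℝ φ x (Pi.single i 1)

/-- Divergence of a vector field `ψ : ℝ^d → ℝ^d`. -/
def divg {d : ℕ} (ψ : (Fin d → ℝ) → (Fin d → ℝ)) (x : Fin d → ℝ) : ℝ :=
  ∑ i, jac ψ x i i

/-- Hessian matrix of a scalar field `u : ℝ^d → ℝ`. -/
def hess {d : ℕ} (u : (Fin d → ℝ) → ℝ) (x : Fin d → ℝ) : Matrix (Fin d) (Fin d) ℝ :=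
  jac (grad' u) x

theorem frobSq_nonneg {d : ℕ} (M : Matrix (Fin d) (Fin d) ℝ) : 0 ≤ frobSq M := by
  unfold frobSq frobInner
  exact Finset.sum_nonneg fun _ _ => Finset.sum_nonneg fun _ _ => mul_self_nonneg _

/-- Cauchy–Schwarz for the Frobenius inner product. -/
theorem frobInner_sq_le {d : ℕ} (M N : Matrix (Fin d) (Fin d) ℝ) :
    frobInner M N ^ 2 ≤ frobSq M * frobSq N := by
  have h := Finset.sum_mul_sq_le_sq_mul_sq (Finset.univ : Finset (Fin d × Fin d))
    (fun p => M p.1 p.2) (fun p => N p.1 p.2)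
  simpa only [frobSq, frobInner, Fintype.sum_prod_type, pow_two] using h

theorem frobSq_sub_transpose {d : ℕ} (M : Matrix (Fin d) (Fin d) ℝ) :
    frobSq (M - Mᵀ) = 2 * frobSq M - 2 * frobInner M Mᵀ := by
  have h : ∑ i, ∑ j, M j i * M j i = ∑ i, ∑ j, M i j * M i j := Finset.sum_comm
  have e : frobSq (M - Mᵀ) = (∑ i, ∑ j, M i j * M i j) + (∑ i, ∑ j, M j i * M j i)
      - 2 * ∑ i, ∑ j, M i j * M j i := by
    simp only [frobSq, frobInner, Matrix.sub_apply, Matrix.transpose_apply, Finset.mul_sum,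
      ← Finset.sum_add_distrib, ← Finset.sum_sub_distrib]
    refine Finset.sum_congr rfl fun i _ => Finset.sum_congr rfl fun j _ => by ring
  rw [e, h]
  simp only [frobSq, frobInner, Matrix.transpose_apply]
  ring

theorem frobInner_smul_sub_one {d : ℕ} (A M : Matrix (Fin d) (Fin d) ℝ) (c : ℝ) :
    frobInner (c • A - 1) M = c * frobInner A M - M.trace := by
  simp only [frobInner, Matrix.sub_apply, Matrix.smul_apply, smul_eq_mul, sub_mul,
    Finset.sum_sub_distrib, Finset.mul_sum, Matrix.one_apply, ite_mul, one_mul, zero_mul,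
    Finset.sum_ite_eq, Finset.mem_univ, if_true, Matrix.trace, Matrix.diag_apply, mul_assoc]

theorem frobSq_smul_sub_one {d : ℕ} (A : Matrix (Fin d) (Fin d) ℝ) (c : ℝ) :
    frobSq (c • A - 1) = c ^ 2 * frobSq A - 2 * c * A.trace + d := by
  have h : frobInner A (c • A - 1) = c * frobSq A - A.trace := by
    rw [frobSq, ← frobInner_smul_sub_one A A c]
    simp only [frobInner, mul_comm]
  rw [frobSq, frobInner_smul_sub_one, h]
  simp only [Matrix.trace_sub, Matrix.trace_smul, Matrix.trace_one, Fintype.card_fin, smul_eq_mul]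
  ring

/-- The pointwise consequence of the special Cordes condition, with `s = √(1 - ε)`. -/
theorem cordes_pointwise {d : ℕ} (A M : Matrix (Fin d) (Fin d) ℝ) {ε Γ s : ℝ} (hε : 0 < ε)
    (hs0 : 0 < s) (hs1 : s < 1) (hs : s ^ 2 = 1 - ε) (htr : 0 < A.trace)
    (hc : frobSq A / A.trace ^ 2 ≤ 1 / ((d : ℝ) - 1 + ε))
    (hΓ : A.trace / frobSq A ≤ Γ) :
    (1 - s) * M.trace ^ 2 ≤ Γ ^ 2 * frobInner A M ^ 2 + (1 - s) * s * frobSq M := by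
  -- A matrix of positive trace is nonzero and has positive size.
  have hd : (1 : ℝ) ≤ d := by
    rcases Nat.eq_zero_or_pos d with rfl | h
    · simp [Matrix.trace] at htr
    · exact_mod_cast h
  have hA : 0 < frobSq A := by
    have h := frobInner_sq_le A 1
    have h1 : frobInner A 1 = A.trace := by
      simp [frobInner, Matrix.one_apply, Matrix.trace]
    rw [h1] at h
    rcases (frobSq_nonneg A).lt_or_eq with h0 | h0
    · exact h0
    · rw [← h0, zero_mul] at h
      nlinarith
  set γ := A.trace / frobSq A with hγ
  have hγ0 : 0 < γ := div_pos htr hA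
  have hγA : γ * frobSq A = A.trace := by rw [hγ]; field_simp
  have hc' : (d : ℝ) - 1 + ε ≤ γ * A.trace := by
    rw [div_le_div_iff₀ (by positivity) (by linarith)] at hc
    rw [hγ, div_mul_eq_mul_div, le_div_iff₀ hA]
    nlinarith
  have hq : (γ * frobInner A M - M.trace) ^ 2 ≤ s ^ 2 * frobSq M := by
    rw [← frobInner_smul_sub_one]
    refine (frobInner_sq_le _ _).trans (mul_le_mul_of_nonneg_right ?_ (frobSq_nonneg M))
    rw [frobSq_smul_sub_one, hs]
    have : γ ^ 2 * frobSq A = γ * A.trace := by rw [← hγA]; ring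
    linarith
  have hp : (γ * frobInner A M) ^ 2 ≤ Γ ^ 2 * frobInner A M ^ 2 := by
    rw [mul_pow]
    exact mul_le_mul_of_nonneg_right (pow_le_pow_left₀ hγ0.le hΓ 2) (sq_nonneg _)
  set p := γ * frobInner A M
  have key : s * ((1 - s) * M.trace ^ 2) ≤ s * (p ^ 2 + (1 - s) * s * frobSq M) := by
    have := mul_le_mul_of_nonneg_left hq (sub_pos.2 hs1).le
    nlinarith [sq_nonneg (s * p + (1 - s) * (p - M.trace))]
  linarith [le_of_mul_le_mul_left key hs0]

/-- Integrating by parts twice exchanges the two directions of differentiation. -/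
theorem integral_fderiv_mul_fderiv_swap {d : ℕ} {u v : (Fin d → ℝ) → ℝ}
    (hu : ContDiff ℝ (⊤ : ℕ∞) u) (hv : ContDiff ℝ (⊤ : ℕ∞) v) (hcu : HasCompactSupport u)
    (a b : Fin d → ℝ) :
    ∫ x, fderiv ℝ u x a * fderiv ℝ v x b = ∫ x, fderiv ℝ u x b * fderiv ℝ v x a := by
  have hdir : ∀ c : Fin d → ℝ, ContDiff ℝ (⊤ : ℕ∞) fun x => fderiv ℝ v x c := fun c =>
    (hv.fderiv_right (m := ((⊤ : ℕ∞) : WithTop ℕ∞)) (by simp)).clm_apply contDiff_const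
  have hudir : ∀ c : Fin d → ℝ, Continuous fun x => fderiv ℝ u x c := fun c =>
    ((hu.fderiv_right (m := ((⊤ : ℕ∞) : WithTop ℕ∞)) (by simp)).clm_apply
      contDiff_const).continuous
  have hsymm : ∀ x, fderiv ℝ (fun y => fderiv ℝ v y b) x a
      = fderiv ℝ (fun y => fderiv ℝ v y a) x b := by
    intro x
    have hdiff : DifferentiableAt ℝ (fderiv ℝ v) x :=
      ((hv.fderiv_right (m := ((⊤ : ℕ∞) : WithTop ℕ∞)) (by simp)).differentiable (by simp)) x
    have hS : IsSymmSndFDerivAt ℝ v x := hv.contDiffAt.isSymmSndFDerivAt (by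
      rw [minSmoothness_of_isRCLikeNormedField]
      exact WithTop.coe_le_coe.2 (le_top : (2 : ℕ∞) ≤ ⊤))
    rw [fderiv_clm_apply hdiff (by fun_prop), fderiv_clm_apply hdiff (by fun_prop)]
    simpa using hS a b
  have hparts : ∀ c e : Fin d → ℝ, ∫ x, u x * fderiv ℝ (fun y => fderiv ℝ v y e) x c
      = - ∫ x, fderiv ℝ u x c * fderiv ℝ v x e := by
    intro c e
    refine integral_mul_fderiv_eq_neg_fderiv_mul_of_integrable ?_ ?_ ?_
      (fun x _ => hu.differentiable (by simp) x) (fun x _ => (hdir e).differentiable (by simp) x)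
    · exact ((hudir c).mul (hdir e).continuous).integrable_of_hasCompactSupport
        (hcu.fderiv_apply (𝕜 := ℝ) c).mul_right
    · exact (hu.continuous.mul (((hdir e).fderiv_right (m := ((⊤ : ℕ∞) : WithTop ℕ∞))
        (by simp)).clm_apply contDiff_const).continuous).integrable_of_hasCompactSupport
        hcu.mul_right
    · exact (hu.continuous.mul (hdir e).continuous).integrable_of_hasCompactSupport hcu.mul_right
  rw [← neg_inj, ← hparts a b, ← hparts b a]
  simp only [hsymm]

section Field

variable {d : ℕ} {ψ : (Fin d → ℝ) → (Fin d → ℝ)}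

theorem jac_apply_eq_fderiv (hψ : ContDiff ℝ (⊤ : ℕ∞) ψ) (x : Fin d → ℝ) (i j : Fin d) :
    jac ψ x i j = fderiv ℝ (fun y => ψ y i) x (Pi.single j 1) := by
  rw [fderiv_apply (hψ.differentiable (by simp) x)]
  rfl

theorem continuous_jac_apply (hψ : ContDiff ℝ (⊤ : ℕ∞) ψ) (i j : Fin d) :
    Continuous fun x => jac ψ x i j :=
  (continuous_apply i).comp ((hψ.continuous_fderiv (by simp)).clm_apply continuous_const)

theorem jac_eq_zero {x : Fin d → ℝ} (hx : x ∉ tsupport ψ) : jac ψ x = 0 := by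
  ext i j
  have h : fderiv ℝ ψ x = 0 :=
    image_eq_zero_of_notMem_tsupport fun h => hx (tsupport_fderiv_subset ℝ h)
  simp [jac, h]

/-- Products of Jacobian entries are continuous with compact support, hence integrable. -/
theorem integrable_jac_mul (hψ : ContDiff ℝ (⊤ : ℕ∞) ψ) (hsupp : HasCompactSupport ψ)
    (i j k l : Fin d) : Integrable fun x => jac ψ x i j * jac ψ x k l :=
  ((continuous_jac_apply hψ i j).mul
    (continuous_jac_apply hψ k l)).integrable_of_hasCompactSupport
    (HasCompactSupport.intro hsupp fun x hx => by simp [jac_eq_zero hx])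

theorem integrable_frobSq_jac (hψ : ContDiff ℝ (⊤ : ℕ∞) ψ) (hsupp : HasCompactSupport ψ) :
    Integrable fun x => frobSq (jac ψ x) := by
  unfold frobSq frobInner
  exact integrable_finsetSum _ fun i _ => integrable_finsetSum _ fun j _ =>
    integrable_jac_mul hψ hsupp i j i j

theorem integrable_frobInner_jac_transpose (hψ : ContDiff ℝ (⊤ : ℕ∞) ψ)
    (hsupp : HasCompactSupport ψ) : Integrable fun x => frobInner (jac ψ x) (jac ψ x)ᵀ :=
  integrable_finsetSum _ fun i _ => integrable_finsetSum _ fun j _ =>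
    integrable_jac_mul hψ hsupp i j j i

theorem trace_sq_eq_sum (M : Matrix (Fin d) (Fin d) ℝ) :
    M.trace ^ 2 = ∑ i, ∑ j, M i i * M j j := by
  rw [pow_two, Matrix.trace, Finset.sum_mul_sum]
  rfl

theorem integrable_trace_jac_sq (hψ : ContDiff ℝ (⊤ : ℕ∞) ψ) (hsupp : HasCompactSupport ψ) :
    Integrable fun x => (jac ψ x).trace ^ 2 := by
  simp only [trace_sq_eq_sum]
  exact integrable_finsetSum _ fun i _ => integrable_finsetSum _ fun j _ =>
    integrable_jac_mul hψ hsupp i i j j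

/-- `∫ Dψ : Dψᵀ = ∫ (div ψ)²` for smooth compactly supported `ψ`. -/
theorem integral_frobInner_jac_transpose (hψ : ContDiff ℝ (⊤ : ℕ∞) ψ)
    (hsupp : HasCompactSupport ψ) :
    ∫ x, frobInner (jac ψ x) (jac ψ x)ᵀ = ∫ x, (jac ψ x).trace ^ 2 := by
  simp only [trace_sq_eq_sum, frobInner, Matrix.transpose_apply]
  rw [integral_finsetSum _ fun i _ => integrable_finsetSum _ fun j _ =>
      integrable_jac_mul hψ hsupp i j j i,
    integral_finsetSum _ fun i _ => integrable_finsetSum _ fun j _ =>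
      integrable_jac_mul hψ hsupp i i j j]
  refine Finset.sum_congr rfl fun i _ => ?_
  rw [integral_finsetSum _ fun j _ => integrable_jac_mul hψ hsupp i j j i,
    integral_finsetSum _ fun j _ => integrable_jac_mul hψ hsupp i i j j]
  refine Finset.sum_congr rfl fun j _ => ?_
  simp only [jac_apply_eq_fderiv hψ]
  exact integral_fderiv_mul_fderiv_swap (contDiff_pi.1 hψ i) (contDiff_pi.1 hψ j)
    (HasCompactSupport.intro hsupp fun x hx => by simp [image_eq_zero_of_notMem_tsupport hx]) _ _

end Field

/-- **Miranda–Talenti-type lemma under the special Cordes condition.**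
Let `Ω ⊆ ℝ^d` be bounded open and `A : Ω → Sym_d(ℝ)` measurable and essentially bounded,
satisfying a.e. in `Ω` the special Cordes condition with parameter `ε ∈ (0,1)` and
`tr A(x) > 0`; let `Γ` be an essential upper bound for `γ := tr A/‖A‖_F²` on `Ω`.  Then for
every smooth compactly supported (in `Ω`) vector field `ψ`,
`(1/2)∫_Ω ‖Dψ − Dψᵀ‖_F² + ∫_Ω (A : Dψ)² ≥ [(1−√(1−ε))²/max(Γ²,1)]·∫_Ω ‖Dψ‖_F²`. -/
theorem miranda_talenti_special_cordes
    {d : ℕ} (Ω : Set (Fin d → ℝ)) (hΩ : IsOpen Ω) (hbdΩ : IsBounded Ω)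
    (A : (Fin d → ℝ) → Matrix (Fin d) (Fin d) ℝ) (hAmeas : ∀ i j, Measurable fun x => A x i j)
    (hAsymm : ∀ x, (A x).IsSymm)
    (K : ℝ) (hAbdd : ∀ᵐ x ∂(volume.restrict Ω), Real.sqrt (frobSq (A x)) ≤ K)
    (ε : ℝ) (hε : ε ∈ Set.Ioo (0 : ℝ) 1)
    (hcordes : ∀ᵐ x ∂(volume.restrict Ω),
      0 < Matrix.trace (A x) ∧
        frobSq (A x) / (Matrix.trace (A x)) ^ 2 ≤ 1 / ((d : ℝ) - 1 + ε))
    (Γ : ℝ) (hΓ : ∀ᵐ x ∂(volume.restrict Ω),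
      Matrix.trace (A x) / frobSq (A x) ≤ Γ)
    (ψ : (Fin d → ℝ) → (Fin d → ℝ)) (hψ : ContDiff ℝ (⊤ : ℕ∞) ψ)
    (hsupp : HasCompactSupport ψ) (hsub : tsupport ψ ⊆ Ω) :
    (1 / 2 : ℝ) * (∫ x in Ω, frobSq (jac ψ x - (jac ψ x)ᵀ))
        + (∫ x in Ω, (frobInner (A x) (jac ψ x)) ^ 2)
      ≥ ((1 - Real.sqrt (1 - ε)) ^ 2 / max (Γ ^ 2) 1)
        * ∫ x in Ω, frobSq (jac ψ x) := by
  obtain ⟨hε0, hε1⟩ := hε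
  set s := Real.sqrt (1 - ε) with hs_def
  have hs0 : 0 < s := Real.sqrt_pos.2 (by linarith)
  have hs : s ^ 2 = 1 - ε := Real.sq_sqrt (by linarith)
  have hs1 : s < 1 := by nlinarith
  have hIF := integrable_frobSq_jac hψ hsupp
  have hIT := integrable_trace_jac_sq hψ hsupp
  have hIX := integrable_frobInner_jac_transpose hψ hsupp
  -- `(A : Dψ)²` is dominated by `K² ‖Dψ‖²`.
  have hIA : Integrable (fun x => frobInner (A x) (jac ψ x) ^ 2) (volume.restrict Ω) := by
    refine Integrable.mono' (hIF.restrict.const_mul (K ^ 2)) ?_ ?_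
    · refine Measurable.aestronglyMeasurable ?_
      unfold frobInner
      refine Measurable.pow_const (Finset.measurable_sum _ fun i _ =>
        Finset.measurable_sum _ fun j _ => ?_) 2
      exact (hAmeas i j).mul (continuous_jac_apply hψ i j).measurable
    · filter_upwards [hAbdd] with x hx
      rw [Real.norm_of_nonneg (sq_nonneg _)]
      refine (frobInner_sq_le _ _).trans (mul_le_mul_of_nonneg_right ?_ (frobSq_nonneg _))
      rw [← Real.sq_sqrt (frobSq_nonneg (A x))]
      exact pow_le_pow_left₀ (Real.sqrt_nonneg _) hx 2
  -- The integrands vanish outside `Ω`, so the integral identity on the whole space localizes.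
  have hdiv : ∫ x in Ω, frobInner (jac ψ x) (jac ψ x)ᵀ = ∫ x in Ω, (jac ψ x).trace ^ 2 := by
    rw [setIntegral_eq_integral_of_forall_compl_eq_zero,
      setIntegral_eq_integral_of_forall_compl_eq_zero, integral_frobInner_jac_transpose hψ hsupp]
    · intro x hx
      simp [jac_eq_zero fun h => hx (hsub h)]
    · intro x hx
      simp [jac_eq_zero fun h => hx (hsub h), frobInner]
  have hrot : ∫ x in Ω, frobSq (jac ψ x - (jac ψ x)ᵀ)
      = 2 * (∫ x in Ω, frobSq (jac ψ x)) - 2 * ∫ x in Ω, (jac ψ x).trace ^ 2 := by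
    simp only [frobSq_sub_transpose]
    rw [integral_sub (hIF.restrict.const_mul 2) (hIX.restrict.const_mul 2),
      integral_const_mul, integral_const_mul, hdiv]
  have hpt : (1 - s) * ∫ x in Ω, (jac ψ x).trace ^ 2
      ≤ Γ ^ 2 * (∫ x in Ω, frobInner (A x) (jac ψ x) ^ 2)
        + (1 - s) * s * ∫ x in Ω, frobSq (jac ψ x) := by
    rw [← integral_const_mul, ← integral_const_mul, ← integral_const_mul,
      ← integral_add (hIA.const_mul _) (hIF.restrict.const_mul _)]
    refine integral_mono_ae (hIT.restrict.const_mul _)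
      ((hIA.const_mul _).add (hIF.restrict.const_mul _)) ?_
    filter_upwards [hcordes, hΓ] with x hx hxΓ
    exact cordes_pointwise (A x) (jac ψ x) hε0 hs0 hs1 hs hx.1 hx.2 hxΓ
  have hR0 : 0 ≤ ∫ x in Ω, frobSq (jac ψ x - (jac ψ x)ᵀ) :=
    integral_nonneg fun x => frobSq_nonneg _
  have ha0 : 0 ≤ ∫ x in Ω, frobInner (A x) (jac ψ x) ^ 2 := integral_nonneg fun x => sq_nonneg _
  have hm : 0 < max (Γ ^ 2) 1 := lt_max_of_lt_right one_pos
  rw [ge_iff_le, div_mul_eq_mul_div, div_le_iff₀ hm]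
  set R := ∫ x in Ω, frobSq (jac ψ x - (jac ψ x)ᵀ)
  set a := ∫ x in Ω, frobInner (A x) (jac ψ x) ^ 2
  have h1 : (1 - s) * R ≤ max (Γ ^ 2) 1 * R :=
    mul_le_mul_of_nonneg_right (by linarith [le_max_right (Γ ^ 2) 1]) hR0
  have h2 : Γ ^ 2 * a ≤ max (Γ ^ 2) 1 * a := mul_le_mul_of_nonneg_right (le_max_left _ _) ha0
  have h3 : (1 - s) * R = (1 - s) * (2 * (∫ x in Ω, frobSq (jac ψ x))
      - 2 * ∫ x in Ω, (jac ψ x).trace ^ 2) := by rw [hrot]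
  linarith
end
end

section
/- Let Ω ⊆ ℝ^d be a bounded open set, λ > 0, 0 ≤ θ ≤ 1 and 0 < ρ < 2. Then for every smooth φ : ℝ^d → ℝ and smooth ψ : ℝ^d → ℝ^d, both with compact support contained in Ω, (1 − ρ/2)·[∫_Ω ‖Dψ‖_F² + 2λ∫_Ω ‖θψ + (1−θ)∇φ‖² + λ²∫_Ω φ²] ≤ (1/2)∫_Ω ‖Dψ − Dψᵀ‖_F² + ∫_Ω (div ψ − λφ)² + (θ² + (1−θ)²)·(λ/ρ)·∫_Ω ‖∇φ − ψ‖². -/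
/-!
The compact supports make every boundary term vanish, so two identities hold: `∫ φ div ψ = -∫ ∇φ · ψ`
and, after exchanging second derivatives, `∫ Dψ : Dψᵀ = ∫ (div ψ)²`. The second gives
`∫ ‖Dψ‖² = ½ ∫ ‖Dψ - Dψᵀ‖² + ∫ (div ψ)²`.

With `C = ½ ∫ ‖Dψ - Dψᵀ‖²`, `T = ∫ (div ψ - λφ)²`, `H = ∫ ∇φ · ψ`, the estimate is thereby reduced
to the nonnegativity of
`(ρ/2)(C + T) + (θ² + (1-θ)²)(λ/ρ) ∫ ‖∇φ - ψ‖² - (2-ρ) λ (∫ ‖θψ + (1-θ)∇φ‖² - H)`,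
which follows from `C ≥ 0`, `T ≥ 0`, `T - 2λH = ∫ (div ψ)² + λ² ∫ φ² ≥ 0` and the positive
semidefiniteness of `(a, b) ↦ ∫ ‖aψ + b∇φ‖²` (lemma `quadratic_bound`). Write `w = θψ + (1-θ)∇φ`,
`e = ∇φ - ψ`. For `ρ ≤ 1` the square `‖ρw + (2θ-1)e‖²` and `T - 2λH ≥ 0` suffice. For `ρ ≥ 1` one uses
`‖(2-ρ)w + (2θ-1)e‖²` and weighs `T ≥ 0` against `T - 2λH ≥ 0` with the weight
`t = 4(ρ-1)/ρ² ∈ [0,1]`.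
-/


open MeasureTheory Matrix Finset Bornology

noncomputable section

/-- Continuous with compact support: the class of integrands for which integrability is automatic. -/
def CcFun {d : ℕ} (f : (Fin d → ℝ) → ℝ) : Prop := Continuous f ∧ HasCompactSupport f

lemma CcFun.integrable {d : ℕ} {f : (Fin d → ℝ) → ℝ} (hf : CcFun f) : Integrable f :=
  hf.1.integrable_of_hasCompactSupport hf.2

lemma CcFun.mul {d : ℕ} {f g : (Fin d → ℝ) → ℝ} (hf : CcFun f) (hg : CcFun g) :
    CcFun (fun x => f x * g x) :=
  ⟨hf.1.mul hg.1, hf.2.mul_right⟩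

lemma CcFun.add {d : ℕ} {f g : (Fin d → ℝ) → ℝ} (hf : CcFun f) (hg : CcFun g) :
    CcFun (fun x => f x + g x) :=
  ⟨hf.1.add hg.1, hf.2.add hg.2⟩

lemma CcFun.const_mul {d : ℕ} {f : (Fin d → ℝ) → ℝ} (c : ℝ) (hf : CcFun f) :
    CcFun (fun x => c * f x) :=
  ⟨continuous_const.mul hf.1, hf.2.mul_left⟩

lemma CcFun.sum {d : ℕ} {ι : Type*} (s : Finset ι) {f : ι → (Fin d → ℝ) → ℝ}
    (hf : ∀ i, CcFun (f i)) : CcFun (fun x => ∑ i ∈ s, f i x) := by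
  classical
  induction s using Finset.induction_on with
  | empty =>
    simp only [Finset.sum_empty]
    exact ⟨continuous_const, HasCompactSupport.zero⟩
  | insert a s ha ih =>
    simp only [Finset.sum_insert ha]
    exact (hf a).add ih

lemma contDiff_fderiv_apply_const {d : ℕ} {f : (Fin d → ℝ) → ℝ} (hf : ContDiff ℝ (⊤ : ℕ∞) f)
    (v : Fin d → ℝ) : ContDiff ℝ (⊤ : ℕ∞) (fun x => fderiv ℝ f x v) :=
  (hf.fderiv_right (m := (⊤ : ℕ∞)) (by simp)).clm_apply contDiff_const

lemma ccFun_fderiv {d : ℕ} {f : (Fin d → ℝ) → ℝ} (hf : ContDiff ℝ (⊤ : ℕ∞) f)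
    (hs : HasCompactSupport f) (v : Fin d → ℝ) : CcFun (fun x => fderiv ℝ f x v) :=
  ⟨(contDiff_fderiv_apply_const hf v).continuous, hs.fderiv_apply ℝ v⟩

lemma integral_by_parts {d : ℕ} {f g : (Fin d → ℝ) → ℝ}
    (hf : ContDiff ℝ (⊤ : ℕ∞) f) (hfs : HasCompactSupport f)
    (hg : ContDiff ℝ (⊤ : ℕ∞) g) (hgs : HasCompactSupport g) (v : Fin d → ℝ) :
    ∫ x, f x * fderiv ℝ g x v = -∫ x, fderiv ℝ f x v * g x := by
  have cf : CcFun f := ⟨hf.continuous, hfs⟩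
  have cg : CcFun g := ⟨hg.continuous, hgs⟩
  exact integral_mul_fderiv_eq_neg_fderiv_mul_of_integrable
    ((ccFun_fderiv hf hfs v).mul cg).integrable (cf.mul (ccFun_fderiv hg hgs v)).integrable
    (cf.mul cg).integrable (fun x _ => hf.differentiable (by simp) x)
    (fun x _ => hg.differentiable (by simp) x)

/-- Two integrations by parts together with the symmetry of second derivatives. -/
lemma integral_fderiv_mul_fderiv_swap_s7 {d : ℕ} {f g : (Fin d → ℝ) → ℝ}
    (hf : ContDiff ℝ (⊤ : ℕ∞) f) (hfs : HasCompactSupport f)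
    (hg : ContDiff ℝ (⊤ : ℕ∞) g) (hgs : HasCompactSupport g) (v w : Fin d → ℝ) :
    ∫ x, fderiv ℝ f x v * fderiv ℝ g x w = ∫ x, fderiv ℝ f x w * fderiv ℝ g x v := by
  have h1 := integral_by_parts hf hfs (contDiff_fderiv_apply_const hg w) (hgs.fderiv_apply ℝ w) v
  have h2 := integral_by_parts hf hfs (contDiff_fderiv_apply_const hg v) (hgs.fderiv_apply ℝ v) w
  have hsymm : ∀ x, fderiv ℝ (fun y => fderiv ℝ g y w) x v
      = fderiv ℝ (fun y => fderiv ℝ g y v) x w := by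
    intro x
    have hd : DifferentiableAt ℝ (fderiv ℝ g) x :=
      (hg.fderiv_right (m := (⊤ : ℕ∞)) (by simp)).differentiable (by simp) x
    have hs : IsSymmSndFDerivAt ℝ g x := by
      refine hg.contDiffAt.isSymmSndFDerivAt ?_
      simp only [minSmoothness_of_isRCLikeNormedField]
      exact WithTop.coe_le_coe.2 (le_top : (2 : ℕ∞) ≤ ⊤)
    rw [fderiv_clm_apply hd (differentiableAt_const _),
      fderiv_clm_apply hd (differentiableAt_const _)]
    simpa using hs v w
  simp only [hsymm] at h1
  linarith

/-- The algebraic core. Here `P = ∫ ‖ψ‖²`, `G = ∫ ‖∇φ‖²`, `H = ∫ ∇φ · ψ`, `C` is the rotation term,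
`T = ∫ (div ψ - λφ)²` and `S = ∫ (div ψ)² + λ² ∫ φ²`. -/
lemma quadratic_bound {lam θ ρ P G H C T S : ℝ} (hlam : 0 < lam) (hθ : θ ∈ Set.Icc (0 : ℝ) 1)
    (hρ : ρ ∈ Set.Ioo (0 : ℝ) 2) (hQ : ∀ a b : ℝ, 0 ≤ a ^ 2 * P + 2 * a * b * H + b ^ 2 * G)
    (hC : 0 ≤ C) (hT : 0 ≤ T) (hS : 0 ≤ S) (hST : S = T - 2 * lam * H) :
    (1 - ρ / 2) * (C + S
        + 2 * lam * (θ ^ 2 * P + 2 * θ * (1 - θ) * H + (1 - θ) ^ 2 * G))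
      ≤ C + T + (θ ^ 2 + (1 - θ) ^ 2) * (lam / ρ) * (P - 2 * H + G) := by
  obtain ⟨hθ0, hθ1⟩ := hθ
  obtain ⟨hρ0, hρ2⟩ := hρ
  have hm : 0 ≤ θ * (1 - θ) := mul_nonneg hθ0 (by linarith)
  have hE : 0 ≤ P - 2 * H + G := by have := hQ (-1) 1; linarith
  have hCρ : 0 ≤ ρ / 2 * C := by positivity
  rw [← sub_nonneg]
  rcases le_total ρ 1 with h | h
  · -- the coefficients of `ρ w + (2θ-1) e` on `ψ` and `∇φ`
    have hq := hQ (ρ * θ - (2 * θ - 1)) (ρ * (1 - θ) + (2 * θ - 1))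
    have hr : 0 ≤ 2 * (θ * (1 - θ)) * (1 - ρ) * (P - 2 * H + G) :=
      mul_nonneg (mul_nonneg (by linarith) (by linarith)) hE
    have hSρ : 0 ≤ ρ / 2 * S := by positivity
    have hsum := mul_nonneg (div_nonneg hlam.le hρ0.le) (add_nonneg hq hr)
    refine (add_nonneg (add_nonneg hCρ hSρ) hsum).trans_eq ?_
    rw [hST]
    field_simp
    ring
  · -- the coefficients of `(2-ρ) w + (2θ-1) e` on `ψ` and `∇φ`
    have hq := hQ ((2 - ρ) * θ - (2 * θ - 1)) ((2 - ρ) * (1 - θ) + (2 * θ - 1))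
    have hr : 0 ≤ 2 * (θ * (1 - θ)) * (ρ - 1) * (P - 2 * H + G) :=
      mul_nonneg (mul_nonneg (by linarith) (by linarith)) hE
    have hsum := mul_nonneg (div_nonneg hlam.le hρ0.le) (add_nonneg hq hr)
    -- the weight `t = 4(ρ-1)/ρ²` and its complement `1 - t = (2-ρ)²/ρ²`
    have hTt : 0 ≤ ρ / 2 * (4 * (ρ - 1) / ρ ^ 2) * T :=
      mul_nonneg (mul_nonneg (by positivity) (div_nonneg (by linarith) (by positivity))) hT
    have hSt : 0 ≤ ρ / 2 * ((2 - ρ) ^ 2 / ρ ^ 2) * S := by positivity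
    refine (add_nonneg (add_nonneg (add_nonneg hCρ hTt) hSt) hsum).trans_eq ?_
    rw [hST]
    field_simp
    ring

/-- **modified Miranda–Talenti estimate, compactly supported case.**
For `Ω ⊆ ℝ^d` bounded open, `λ > 0`, `θ ∈ [0,1]`, `ρ ∈ (0,2)`, and smooth `φ, ψ` with
compact support in `Ω`:
`(1 − ρ/2)·[∫ ‖Dψ‖_F² + 2λ∫ ‖θψ + (1−θ)∇φ‖² + λ²∫ φ²]
  ≤ (1/2)∫ ‖Dψ − Dψᵀ‖_F² + ∫ (div ψ − λφ)² + (θ² + (1−θ)²)(λ/ρ)∫ ‖∇φ − ψ‖²`. -/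
theorem modified_miranda_talenti
    {d : ℕ} (Ω : Set (Fin d → ℝ)) (hΩ : IsOpen Ω) (hbdΩ : IsBounded Ω)
    (lam θ ρ : ℝ) (hlam : 0 < lam) (hθ : θ ∈ Set.Icc (0 : ℝ) 1)
    (hρ : ρ ∈ Set.Ioo (0 : ℝ) 2)
    (φ : (Fin d → ℝ) → ℝ) (hφ : ContDiff ℝ (⊤ : ℕ∞) φ)
    (hφsupp : HasCompactSupport φ) (hφsub : tsupport φ ⊆ Ω)
    (ψ : (Fin d → ℝ) → (Fin d → ℝ)) (hψ : ContDiff ℝ (⊤ : ℕ∞) ψ)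
    (hψsupp : HasCompactSupport ψ) (hψsub : tsupport ψ ⊆ Ω) :
    (1 - ρ / 2)
        * ((∫ x in Ω, frobSq (jac ψ x))
            + 2 * lam
              * (∫ x in Ω, vecSq fun i => θ * ψ x i + (1 - θ) * grad' φ x i)
            + lam ^ 2 * ∫ x in Ω, (φ x) ^ 2)
      ≤ (1 / 2 : ℝ) * (∫ x in Ω, frobSq (jac ψ x - (jac ψ x)ᵀ))
          + (∫ x in Ω, (divg ψ x - lam * φ x) ^ 2)
          + (θ ^ 2 + (1 - θ) ^ 2) * (lam / ρ)
            * ∫ x in Ω, vecSq fun i => grad' φ x i - ψ x i := by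
  have hψc : ∀ i, ContDiff ℝ (⊤ : ℕ∞) (fun x => ψ x i) := fun i => contDiff_pi.1 hψ i
  have hψs : ∀ i, HasCompactSupport (fun x => ψ x i) := fun i =>
    hψsupp.comp_left (g := fun v : Fin d → ℝ => v i) rfl
  have hjac : ∀ x i j, jac ψ x i j = fderiv ℝ (fun y => ψ y i) x (Pi.single j 1) := by
    intro x i j
    simp only [jac, Matrix.of_apply]
    rw [fderiv_apply (hψ.differentiable (by simp) x)]
    rfl
  have cφ : CcFun φ := ⟨hφ.continuous, hφsupp⟩
  have cψ : ∀ i, CcFun (fun x => ψ x i) := fun i => ⟨(hψc i).continuous, hψs i⟩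
  have cJ : ∀ i j, CcFun (fun x => jac ψ x i j) := by
    intro i j
    simp only [hjac]
    exact ccFun_fderiv (hψc i) (hψs i) _
  have cg : ∀ i, CcFun (fun x => grad' φ x i) := fun i => ccFun_fderiv hφ hφsupp _
  have cdiv : CcFun (divg ψ) := CcFun.sum _ fun i => cJ i i
  -- every integrand vanishes off `Ω`, so the integrals may be taken over the whole space
  have zφ : ∀ x, x ∉ Ω → φ x = 0 := fun x hx =>
    image_eq_zero_of_notMem_tsupport fun h => hx (hφsub h)
  have zψ : ∀ x, x ∉ Ω → ψ x = 0 := fun x hx =>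
    image_eq_zero_of_notMem_tsupport fun h => hx (hψsub h)
  have zg : ∀ x, x ∉ Ω → grad' φ x = 0 := by
    intro x hx
    ext i
    simp [grad', fderiv_of_notMem_tsupport (𝕜 := ℝ) fun h => hx (hφsub h)]
  have zJ : ∀ x, x ∉ Ω → jac ψ x = 0 := by
    intro x hx
    ext i j
    simp [jac, fderiv_of_notMem_tsupport (𝕜 := ℝ) fun h => hx (hψsub h)]
  rw [setIntegral_eq_integral_of_forall_compl_eq_zero
      (fun x hx => by simp [zJ x hx, frobSq, frobInner]),
    setIntegral_eq_integral_of_forall_compl_eq_zero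
      (fun x hx => by simp [zψ x hx, zg x hx, vecSq]),
    setIntegral_eq_integral_of_forall_compl_eq_zero
      (fun x hx => by simp [zφ x hx]),
    setIntegral_eq_integral_of_forall_compl_eq_zero
      (fun x hx => by simp [zJ x hx, frobSq, frobInner]),
    setIntegral_eq_integral_of_forall_compl_eq_zero
      (fun x hx => by simp [zJ x hx, zφ x hx, divg]),
    setIntegral_eq_integral_of_forall_compl_eq_zero
      (fun x hx => by simp [zψ x hx, zg x hx, vecSq])]
  have hquad : ∀ a b : ℝ, ∫ x, vecSq (fun i => a * ψ x i + b * grad' φ x i)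
      = a ^ 2 * (∫ x, ∑ i, ψ x i * ψ x i) + 2 * a * b * (∫ x, ∑ i, grad' φ x i * ψ x i)
        + b ^ 2 * (∫ x, ∑ i, grad' φ x i * grad' φ x i) := by
    intro a b
    have c1 := (CcFun.sum univ fun i => (cψ i).mul (cψ i)).const_mul (a ^ 2)
    have c2 := (CcFun.sum univ fun i => (cg i).mul (cψ i)).const_mul (2 * a * b)
    have c3 := (CcFun.sum univ fun i => (cg i).mul (cg i)).const_mul (b ^ 2)
    rw [← integral_const_mul, ← integral_const_mul, ← integral_const_mul,
      ← integral_add c1.integrable c2.integrable,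
      ← integral_add (c1.add c2).integrable c3.integrable]
    refine integral_congr_ae (Filter.Eventually.of_forall fun x => ?_)
    simp only [vecSq, Finset.mul_sum, ← Finset.sum_add_distrib]
    exact Finset.sum_congr rfl fun i _ => by ring
  have hdiff : ∫ x, vecSq (fun i => grad' φ x i - ψ x i)
      = (∫ x, ∑ i, ψ x i * ψ x i) - 2 * (∫ x, ∑ i, grad' φ x i * ψ x i)
        + (∫ x, ∑ i, grad' φ x i * grad' φ x i) := by
    have h := hquad (-1) 1
    have he : ∀ x, (fun i => -1 * ψ x i + 1 * grad' φ x i) = fun i => grad' φ x i - ψ x i :=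
      fun x => funext fun i => by ring
    simp only [he] at h
    rw [h]
    ring
  have hcross : ∫ x, ∑ i, ∑ j, jac ψ x i j * jac ψ x j i = ∫ x, divg ψ x * divg ψ x := by
    have e : ∀ x, divg ψ x * divg ψ x = ∑ i, ∑ j, jac ψ x i i * jac ψ x j j := fun x => by
      rw [divg, Finset.sum_mul_sum]
    simp only [e]
    rw [integral_finsetSum _ fun i _ => (CcFun.sum _ fun j => (cJ i j).mul (cJ j i)).integrable,
      integral_finsetSum _ fun i _ => (CcFun.sum _ fun j => (cJ i i).mul (cJ j j)).integrable]
    refine Finset.sum_congr rfl fun i _ => ?_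
    rw [integral_finsetSum _ fun j _ => ((cJ i j).mul (cJ j i)).integrable,
      integral_finsetSum _ fun j _ => ((cJ i i).mul (cJ j j)).integrable]
    refine Finset.sum_congr rfl fun j _ => ?_
    simp only [hjac]
    exact integral_fderiv_mul_fderiv_swap_s7 (hψc i) (hψs i) (hψc j) (hψs j) _ _
  have hφdiv : ∫ x, φ x * divg ψ x = -∫ x, ∑ i, grad' φ x i * ψ x i := by
    simp only [divg, Finset.mul_sum]
    rw [integral_finsetSum _ fun i _ => (cφ.mul (cJ i i)).integrable,
      integral_finsetSum _ fun i _ => ((cg i).mul (cψ i)).integrable, ← Finset.sum_neg_distrib]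
    refine Finset.sum_congr rfl fun i _ => ?_
    simp only [hjac]
    exact integral_by_parts hφ hφsupp (hψc i) (hψs i) _
  have hA : ∫ x, frobSq (jac ψ x)
      = (1 / 2 : ℝ) * (∫ x, frobSq (jac ψ x - (jac ψ x)ᵀ)) + ∫ x, divg ψ x * divg ψ x := by
    have hpt : ∀ x, frobSq (jac ψ x - (jac ψ x)ᵀ)
        = 2 * frobSq (jac ψ x) + (-2) * ∑ i, ∑ j, jac ψ x i j * jac ψ x j i := by
      intro x
      have hswap : ∑ i, ∑ j, jac ψ x j i * jac ψ x j i = ∑ i, ∑ j, jac ψ x i j * jac ψ x i j :=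
        Finset.sum_comm
      have hexp : frobSq (jac ψ x - (jac ψ x)ᵀ)
          = ∑ i, ∑ j, jac ψ x i j * jac ψ x i j + ∑ i, ∑ j, jac ψ x j i * jac ψ x j i
            + (-2) * ∑ i, ∑ j, jac ψ x i j * jac ψ x j i := by
        simp only [frobSq, frobInner, Finset.mul_sum, ← Finset.sum_add_distrib]
        refine Finset.sum_congr rfl fun i _ => Finset.sum_congr rfl fun j _ => ?_
        simp only [Matrix.sub_apply, Matrix.transpose_apply]
        ring
      rw [hexp, hswap, frobSq, frobInner]
      ring
    have c1 : CcFun fun x => frobSq (jac ψ x) := by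
      unfold frobSq frobInner
      exact CcFun.sum _ fun i => CcFun.sum _ fun j => (cJ i j).mul (cJ i j)
    have c2 : CcFun fun x => ∑ i, ∑ j, jac ψ x i j * jac ψ x j i :=
      CcFun.sum _ fun i => CcFun.sum _ fun j => (cJ i j).mul (cJ j i)
    simp only [hpt]
    rw [integral_add (c1.const_mul 2).integrable (c2.const_mul (-2)).integrable,
      integral_const_mul, integral_const_mul, hcross]
    ring
  have hT : ∫ x, (divg ψ x - lam * φ x) ^ 2
      = (∫ x, divg ψ x * divg ψ x) + (-2 * lam) * (∫ x, φ x * divg ψ x)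
        + lam ^ 2 * ∫ x, φ x ^ 2 := by
    have c1 := cdiv.mul cdiv
    have c2 := (cφ.mul cdiv).const_mul (-2 * lam)
    have c3 : CcFun fun x => lam ^ 2 * φ x ^ 2 := by
      simpa only [pow_two (φ _)] using (cφ.mul cφ).const_mul (lam ^ 2)
    rw [← integral_const_mul, ← integral_const_mul, ← integral_add c1.integrable c2.integrable,
      ← integral_add (c1.add c2).integrable c3.integrable]
    exact integral_congr_ae (Filter.Eventually.of_forall fun x => by ring)
  have hC0 : 0 ≤ (1 / 2 : ℝ) * ∫ x, frobSq (jac ψ x - (jac ψ x)ᵀ) :=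
    mul_nonneg (by norm_num) (integral_nonneg fun x => by
      unfold frobSq frobInner
      exact Finset.sum_nonneg fun i _ => Finset.sum_nonneg fun j _ => mul_self_nonneg _)
  have hT0 : 0 ≤ ∫ x, (divg ψ x - lam * φ x) ^ 2 := integral_nonneg fun x => sq_nonneg _
  have hS0 : 0 ≤ (∫ x, divg ψ x * divg ψ x) + lam ^ 2 * ∫ x, φ x ^ 2 :=
    add_nonneg (integral_nonneg fun x => mul_self_nonneg _)
      (mul_nonneg (sq_nonneg _) (integral_nonneg fun x => sq_nonneg _))
  have hQ : ∀ a b : ℝ, 0 ≤ a ^ 2 * (∫ x, ∑ i, ψ x i * ψ x i)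
      + 2 * a * b * (∫ x, ∑ i, grad' φ x i * ψ x i)
      + b ^ 2 * (∫ x, ∑ i, grad' φ x i * grad' φ x i) := fun a b => by
    rw [← hquad]
    exact integral_nonneg fun x => Finset.sum_nonneg fun i _ => sq_nonneg _
  have key := quadratic_bound hlam hθ hρ hQ hC0 hT0 hS0 (by rw [hT, hφdiv]; ring)
  rw [hA, hquad, hdiff]
  refine le_trans (le_of_eq ?_) key
  ring
end
end

section
/- (A posteriori residual upper bound.) Let Ω ⊆ ℝ^d be a bounded open set, 0 ≤ θ ≤ 1, and A : Ω → Sym_d(ℝ), b : Ω → ℝ^d, c : Ω → [0,∞) measurable and essentially bounded. Let u : ℝ^d → ℝ be twice continuously differentiable with A : D²u + b·∇u − cu = f almost everywhere in Ω, and let u_h : ℝ^d → ℝ be C¹, g_h : ℝ^d → ℝ^d be C¹, and H_h : Ω → Sym_d(ℝ) be measurable and square-integrable. Set e := (u − u_h, ∇u − g_h, D²u − H_h) and suppose the coercivity a_θ(e, e) ≥ C₂·‖e‖²_Y holds for some C₂ > 0 (and all integrals involved are finite). Then ‖e‖²_Y ≤ C₂^{-1}·[ ∫_Ω ‖∇u_h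 − g_h‖² + ∫_Ω ‖Dg_h − H_h‖_F² + (1/2)∫_Ω ‖Dg_h − Dg_hᵀ‖_F² + ∫_Ω (L_θ(u_h, g_h, H_h) − f)² ]. -/
/-! The error triple `e = (u − u_h, ∇u − g_h, D²u − H_h)` satisfies the identity
`a_θ(e, e) = ∫ ‖∇u_h − g_h‖² + ∫ ‖Dg_h − H_h‖_F² + ½ ∫ ‖Dg_h − Dg_hᵀ‖_F²
+ ∫ (L_θ(u_h, g_h, H_h) − f)²`, and the bound follows by dividing the coercivity inequality
by `C₂`. The identity holds integrand by integrand: the exact solution cancels from the first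
two terms (`grad'_sub`, `jac_grad'_sub`), from the third because `D²u` is symmetric
(`hess_symm`), and from the last because `L_θ` is linear and `L_θ(u, ∇u, D²u) = f` almost
everywhere. -/


open MeasureTheory Matrix Finset Bornology

noncomputable section

/-- The operator `L_θ(φ, ψ, Ξ) := A : Ξ + b·(θψ + (1−θ)∇φ) − cφ` evaluated at `x`. -/
def Ltheta {d : ℕ} (A : (Fin d → ℝ) → Matrix (Fin d) (Fin d) ℝ)
    (b : (Fin d → ℝ) → Fin d → ℝ) (c : (Fin d → ℝ) → ℝ) (θ : ℝ)
    (φ : (Fin d → ℝ) → ℝ) (ψ : (Fin d → ℝ) → (Fin d → ℝ))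
    (Ξ : (Fin d → ℝ) → Matrix (Fin d) (Fin d) ℝ) (x : Fin d → ℝ) : ℝ :=
  frobInner (A x) (Ξ x)
    + (∑ i, b x i * (θ * ψ x i + (1 - θ) * grad' φ x i)) - c x * φ x

/-- The quadratic form `a_θ((φ,ψ,Ξ),(φ,ψ,Ξ))` of the least-squares functional. -/
def aQuadSelf {d : ℕ} (Ω : Set (Fin d → ℝ))
    (A : (Fin d → ℝ) → Matrix (Fin d) (Fin d) ℝ)
    (b : (Fin d → ℝ) → Fin d → ℝ) (c : (Fin d → ℝ) → ℝ) (θ : ℝ)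
    (φ : (Fin d → ℝ) → ℝ) (ψ : (Fin d → ℝ) → (Fin d → ℝ))
    (Ξ : (Fin d → ℝ) → Matrix (Fin d) (Fin d) ℝ) : ℝ :=
  (∫ x in Ω, vecSq fun i => grad' φ x i - ψ x i)
    + (∫ x in Ω, frobSq (jac ψ x - Ξ x))
    + (1 / 2 : ℝ) * (∫ x in Ω, frobSq (jac ψ x - (jac ψ x)ᵀ))
    + ∫ x in Ω, (Ltheta A b c θ φ ψ Ξ x) ^ 2

/-- The squared `Y`-norm `‖(φ,ψ,Ξ)‖²_Y = ‖φ‖²_{H¹} + ‖ψ‖²_{H¹} + ∫_Ω ‖Ξ‖_F²`. -/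
def Ynorm2 {d : ℕ} (Ω : Set (Fin d → ℝ))
    (φ : (Fin d → ℝ) → ℝ) (ψ : (Fin d → ℝ) → (Fin d → ℝ))
    (Ξ : (Fin d → ℝ) → Matrix (Fin d) (Fin d) ℝ) : ℝ :=
  ((∫ x in Ω, (φ x) ^ 2) + ∫ x in Ω, vecSq (grad' φ x))
    + ((∫ x in Ω, vecSq (ψ x)) + ∫ x in Ω, frobSq (jac ψ x))
    + ∫ x in Ω, frobSq (Ξ x)

lemma grad'_sub {d : ℕ} {u v : (Fin d → ℝ) → ℝ} {x : Fin d → ℝ}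
    (hu : DifferentiableAt ℝ u x) (hv : DifferentiableAt ℝ v x) (i : Fin d) :
    grad' (fun y => u y - v y) x i = grad' u x i - grad' v x i := by
  simp only [grad']
  rw [fderiv_fun_sub hu hv]
  rfl

lemma differentiable_grad' {d : ℕ} {u : (Fin d → ℝ) → ℝ} (hu : ContDiff ℝ 2 u) :
    Differentiable ℝ (grad' u) := by
  have h : Differentiable ℝ (fderiv ℝ u) :=
    (hu.fderiv_right (m := 1) (by norm_num)).differentiable (by norm_num)
  rw [differentiable_pi]
  intro i
  exact h.clm_apply (differentiable_const _)

lemma hess_apply {d : ℕ} {u : (Fin d → ℝ) → ℝ} (hu : ContDiff ℝ 2 u) (x : Fin d → ℝ)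
    (i j : Fin d) :
    hess u x i j = fderiv ℝ (fderiv ℝ u) x (Pi.single j 1) (Pi.single i 1) := by
  have h : Differentiable ℝ (fderiv ℝ u) :=
    (hu.fderiv_right (m := 1) (by norm_num)).differentiable (by norm_num)
  have hg := (hasFDerivAt_pi'.1 (differentiable_grad' hu x).hasFDerivAt) i
  have hg' : HasFDerivAt (fun y => grad' u y i) _ x :=
    (h x).hasFDerivAt.clm_apply (hasFDerivAt_const (Pi.single i 1 : Fin d → ℝ) x)
  have := congrArg (fun T => T (Pi.single j 1)) (hg.unique hg')
  simpa [hess, jac] using this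

lemma hess_symm {d : ℕ} {u : (Fin d → ℝ) → ℝ} (hu : ContDiff ℝ 2 u) (x : Fin d → ℝ)
    (i j : Fin d) : hess u x i j = hess u x j i := by
  rw [hess_apply hu, hess_apply hu]
  exact (hu.contDiffAt.isSymmSndFDerivAt (by simp)) _ _

lemma jac_grad'_sub {d : ℕ} {u : (Fin d → ℝ) → ℝ} (hu : ContDiff ℝ 2 u)
    {g : (Fin d → ℝ) → (Fin d → ℝ)} {x : Fin d → ℝ} (hg : DifferentiableAt ℝ g x) :
    jac (fun y => grad' u y - g y) x = hess u x - jac g x := by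
  ext i j
  simp only [jac, hess, Matrix.sub_apply, Matrix.of_apply]
  rw [fderiv_fun_sub (differentiable_grad' hu x) hg]
  rfl

lemma frobSq_neg {d : ℕ} (M : Matrix (Fin d) (Fin d) ℝ) : frobSq (-M) = frobSq M := by
  simp [frobSq, frobInner]

/-- **a posteriori residual upper bound.**
If `u` solves `A : D²u + b·∇u − cu = f` a.e. in `Ω`, `(u_h, g_h, H_h)` is any discrete
triple, `e := (u − u_h, ∇u − g_h, D²u − H_h)` and the coercivity `a_θ(e,e) ≥ C₂‖e‖²_Y`
holds, then
`‖e‖²_Y ≤ C₂⁻¹·[∫ ‖∇u_h − g_h‖² + ∫ ‖Dg_h − H_h‖_F² + (1/2)∫ ‖Dg_h − Dg_hᵀ‖_F²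
  + ∫ (L_θ(u_h,g_h,H_h) − f)²]`. -/
theorem aposteriori_residual_upper_bound
    {d : ℕ} (Ω : Set (Fin d → ℝ)) (hΩ : IsOpen Ω) (hbdΩ : IsBounded Ω)
    (θ : ℝ) (hθ : θ ∈ Set.Icc (0 : ℝ) 1)
    (A : (Fin d → ℝ) → Matrix (Fin d) (Fin d) ℝ)
    (hAmeas : ∀ i j, Measurable fun x => A x i j)
    (hAsymm : ∀ x, (A x).IsSymm)
    (b : (Fin d → ℝ) → Fin d → ℝ) (hbmeas : ∀ i, Measurable fun x => b x i)
    (c : (Fin d → ℝ) → ℝ) (hcmeas : Measurable c) (hc : ∀ x, 0 ≤ c x)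
    (KA KB KC : ℝ)
    (hAbdd : ∀ᵐ x ∂(volume.restrict Ω), Real.sqrt (frobSq (A x)) ≤ KA)
    (hbbdd : ∀ᵐ x ∂(volume.restrict Ω), Real.sqrt (vecSq (b x)) ≤ KB)
    (hcbdd : ∀ᵐ x ∂(volume.restrict Ω), c x ≤ KC)
    (f : (Fin d → ℝ) → ℝ)
    (u : (Fin d → ℝ) → ℝ) (hu : ContDiff ℝ 2 u)
    (hpde : ∀ᵐ x ∂(volume.restrict Ω),
      frobInner (A x) (hess u x) + (∑ i, b x i * grad' u x i) - c x * u x = f x)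
    (uh : (Fin d → ℝ) → ℝ) (huh : ContDiff ℝ 1 uh)
    (gh : (Fin d → ℝ) → (Fin d → ℝ)) (hgh : ContDiff ℝ 1 gh)
    (Hh : (Fin d → ℝ) → Matrix (Fin d) (Fin d) ℝ)
    (hHhmeas : ∀ i j, Measurable fun x => Hh x i j)
    (hHhsymm : ∀ x, (Hh x).IsSymm)
    (hHhL2 : Integrable (fun x => frobSq (Hh x)) (volume.restrict Ω))
    -- finiteness of all the integrals involved
    (hint1 : Integrable (fun x => (u x - uh x) ^ 2) (volume.restrict Ω))
    (hint2 : Integrable (fun x => vecSq (grad' (fun y => u y - uh y) x))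
      (volume.restrict Ω))
    (hint3 : Integrable (fun x => vecSq fun i => grad' u x i - gh x i)
      (volume.restrict Ω))
    (hint4 : Integrable (fun x => frobSq (jac (fun y => grad' u y - gh y) x))
      (volume.restrict Ω))
    (hint5 : Integrable (fun x => frobSq (hess u x - Hh x)) (volume.restrict Ω))
    (hint6 : Integrable (fun x => vecSq fun i => grad' uh x i - gh x i)
      (volume.restrict Ω))
    (hint7 : Integrable (fun x => frobSq (jac gh x - Hh x)) (volume.restrict Ω))
    (hint8 : Integrable (fun x => frobSq (jac gh x - (jac gh x)ᵀ)) (volume.restrict Ω))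
    (hint9 : Integrable (fun x => (Ltheta A b c θ uh gh Hh x - f x) ^ 2)
      (volume.restrict Ω))
    (C₂ : ℝ) (hC₂ : 0 < C₂)
    (hcoer : aQuadSelf Ω A b c θ (fun x => u x - uh x) (fun x => grad' u x - gh x)
          (fun x => hess u x - Hh x)
        ≥ C₂ * Ynorm2 Ω (fun x => u x - uh x) (fun x => grad' u x - gh x)
          (fun x => hess u x - Hh x)) :
    Ynorm2 Ω (fun x => u x - uh x) (fun x => grad' u x - gh x)
        (fun x => hess u x - Hh x)
      ≤ C₂⁻¹ * ((∫ x in Ω, vecSq fun i => grad' uh x i - gh x i)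
          + (∫ x in Ω, frobSq (jac gh x - Hh x))
          + (1 / 2 : ℝ) * (∫ x in Ω, frobSq (jac gh x - (jac gh x)ᵀ))
          + ∫ x in Ω, (Ltheta A b c θ uh gh Hh x - f x) ^ 2) := by
  have hud : Differentiable ℝ u := hu.differentiable (by norm_num)
  have huhd : Differentiable ℝ uh := huh.differentiable (by norm_num)
  have hghd : Differentiable ℝ gh := hgh.differentiable (by norm_num)
  have key : aQuadSelf Ω A b c θ (fun x => u x - uh x) (fun x => grad' u x - gh x)
      (fun x => hess u x - Hh x) =
      (∫ x in Ω, vecSq fun i => grad' uh x i - gh x i)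
          + (∫ x in Ω, frobSq (jac gh x - Hh x))
          + (1 / 2 : ℝ) * (∫ x in Ω, frobSq (jac gh x - (jac gh x)ᵀ))
          + ∫ x in Ω, (Ltheta A b c θ uh gh Hh x - f x) ^ 2 := by
    unfold aQuadSelf
    congr 1
    · congr 1
      · congr 1
        · congr 1
          funext x
          simp only [vecSq]
          refine Finset.sum_congr rfl fun i _ => ?_
          rw [grad'_sub (hud x) (huhd x), Pi.sub_apply]
          ring
        · congr 1
          funext x
          rw [jac_grad'_sub hu (hghd x), ← frobSq_neg]
          congr 1
          ext i j
          simp only [Matrix.neg_apply, Matrix.sub_apply]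
          ring
      · congr 2
        funext x
        rw [jac_grad'_sub hu (hghd x), ← frobSq_neg]
        congr 1
        ext i j
        simp only [Matrix.neg_apply, Matrix.sub_apply, Matrix.transpose_apply]
        rw [hess_symm hu x i j]
        ring
    · refine integral_congr_ae ?_
      filter_upwards [hpde] with x hx
      have hL : Ltheta A b c θ (fun x => u x - uh x) (fun x => grad' u x - gh x)
          (fun x => hess u x - Hh x) x = f x - Ltheta A b c θ uh gh Hh x := by
        rw [← hx]
        have h1 : frobInner (A x) (hess u x - Hh x)
            = frobInner (A x) (hess u x) - frobInner (A x) (Hh x) := by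
          simp only [frobInner, Matrix.sub_apply, mul_sub, Finset.sum_sub_distrib]
        -- The `θ`-weighted gradient of the exact solution is `θ∇u + (1 − θ)∇u = ∇u`.
        have h2 : (∑ i, b x i * (θ * (grad' u x - gh x) i
              + (1 - θ) * grad' (fun x => u x - uh x) x i))
            = (∑ i, b x i * grad' u x i)
              - ∑ i, b x i * (θ * gh x i + (1 - θ) * grad' uh x i) := by
          rw [← Finset.sum_sub_distrib]
          refine Finset.sum_congr rfl fun i _ => ?_
          rw [grad'_sub (hud x) (huhd x), Pi.sub_apply]
          ring
        simp only [Ltheta]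
        rw [h1, h2]
        ring
      simp only [hL]
      ring
  rw [← key, le_inv_mul_iff₀ hC₂]
  exact hcoer
end
end
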